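/- Let u : ℝ² → ℝ be a smooth solution of Equation (E2): u_yy = (u_x + x)·u_xy − u_y·(u_xx + 2). Then the pair P := u·u_xx + 3u + u_y, Q := u·u_xy + x·u_y is a conservation law: ∂P/∂y = ∂Q/∂x at every point of ℝ². -/

import Mathlib

/-- Partial derivative of a function on `ℝ²` in the direction `v`. -/
noncomputable def pd (v : ℝ × ℝ) (f : ℝ × ℝ → ℝ) : ℝ × ℝ → ℝ :=
  fun p => fderiv ℝ f p v

/-- Coordinates are `(x, y)`. -/
noncomputable def dx : (ℝ × ℝ → ℝ) → ℝ × ℝ → ℝ := pd (1, 0)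
noncomputable def dy : (ℝ × ℝ → ℝ) → ℝ × ℝ → ℝ := pd (0, 1)

/-! For an arbitrary `C³` function `u`, solution or not,
`P_y - Q_x = u_yy - ((u_x + x) u_xy - u_y (u_xx + 2))`:
the third-order terms `u u_xxy` cancel by symmetry of mixed partials, and what is left is the
difference of the two sides of (E2). In other words, the conservation law has characteristic `1`.
-/

section PartialDerivative

variable {f g : ℝ × ℝ → ℝ} {p : ℝ × ℝ}

theorem contDiffAt_pd {m n : WithTop ℕ∞} (v : ℝ × ℝ) (hf : ContDiffAt ℝ n f p)
    (hmn : m + 1 ≤ n) : ContDiffAt ℝ m (pd v f) p :=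
  (hf.fderiv_right hmn).clm_apply contDiffAt_const

theorem pd_add (v : ℝ × ℝ) (hf : DifferentiableAt ℝ f p) (hg : DifferentiableAt ℝ g p) :
    pd v (fun q => f q + g q) p = pd v f p + pd v g p := by
  simp [pd, fderiv_fun_add hf hg]

theorem pd_mul (v : ℝ × ℝ) (hf : DifferentiableAt ℝ f p) (hg : DifferentiableAt ℝ g p) :
    pd v (fun q => f q * g q) p = f p * pd v g p + g p * pd v f p := by
  simp [pd, fderiv_fun_mul hf hg]

theorem pd_const_mul (v : ℝ × ℝ) (c : ℝ) (hf : DifferentiableAt ℝ f p) :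
    pd v (fun q => c * f q) p = c * pd v f p := by
  simp [pd, fderiv_const_mul hf]

theorem pd_fst (v : ℝ × ℝ) : pd v (fun q => q.1) p = v.1 := by
  simp [pd, fderiv_fst]

theorem pd_pd_eq_fderiv_fderiv (v w : ℝ × ℝ) (hf : DifferentiableAt ℝ (fderiv ℝ f) p) :
    pd v (pd w f) p = fderiv ℝ (fderiv ℝ f) p v w := by
  change fderiv ℝ (fun q => fderiv ℝ f q w) p v = _
  simp [fderiv_clm_apply hf (differentiableAt_const w)]

theorem pd_comm (v w : ℝ × ℝ) (hf : ContDiffAt ℝ 2 f p) :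
    pd v (pd w f) p = pd w (pd v f) p := by
  have hf' : DifferentiableAt ℝ (fderiv ℝ f) p :=
    (hf.fderiv_right (m := 1) (by norm_num)).differentiableAt one_ne_zero
  have hsymm : IsSymmSndFDerivAt ℝ f p := hf.isSymmSndFDerivAt (by simp)
  rw [pd_pd_eq_fderiv_fderiv v w hf', pd_pd_eq_fderiv_fderiv w v hf', hsymm v w]

end PartialDerivative

/-- The component `P = u u_xx + 3u + u_y` of the conservation law `P_y = Q_x` of (E2): the
conserved density, with `y` in the role of time. -/
noncomputable def e2Density (u : ℝ × ℝ → ℝ) : ℝ × ℝ → ℝ :=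
  fun q => u q * dx (dx u) q + 3 * u q + dy u q

/-- The component `Q = u u_xy + x u_y` of the conservation law `P_y = Q_x` of (E2): the flux of
`e2Density`, with the sign convention that the two derivatives are equal rather than opposite. -/
noncomputable def e2Flux (u : ℝ × ℝ → ℝ) : ℝ × ℝ → ℝ :=
  fun q => u q * dy (dx u) q + q.1 * dy u q

section ConservationLaw

variable {u : ℝ × ℝ → ℝ} {p : ℝ × ℝ}

theorem dy_e2Density (hu : DifferentiableAt ℝ u p) (huy : DifferentiableAt ℝ (dy u) p)
    (huxx : DifferentiableAt ℝ (dx (dx u)) p) :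
    dy (e2Density u) p =
      u p * dy (dx (dx u)) p + dx (dx u) p * dy u p + 3 * dy u p + dy (dy u) p := by
  unfold e2Density dx dy at *
  rw [pd_add _ ((hu.fun_mul huxx).fun_add (hu.const_mul 3)) huy,
    pd_add _ (hu.fun_mul huxx) (hu.const_mul 3), pd_mul _ hu huxx, pd_const_mul _ 3 hu]

theorem dx_e2Flux (hu : DifferentiableAt ℝ u p) (huy : DifferentiableAt ℝ (dy u) p)
    (huxy : DifferentiableAt ℝ (dy (dx u)) p) :
    dx (e2Flux u) p =
      u p * dx (dy (dx u)) p + dy (dx u) p * dx u p + (p.1 * dx (dy u) p + dy u p) := by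
  unfold e2Flux dx dy at *
  rw [pd_add _ (hu.fun_mul huxy) (differentiableAt_fst.fun_mul huy), pd_mul _ hu huxy,
    pd_mul _ differentiableAt_fst huy, pd_fst, mul_one]

theorem dy_e2Density_sub_dx_e2Flux (hu : ContDiffAt ℝ 3 u p) :
    dy (e2Density u) p - dx (e2Flux u) p =
      dy (dy u) p - ((dx u p + p.1) * dy (dx u) p - dy u p * (dx (dx u) p + 2)) := by
  have hux : ContDiffAt ℝ 2 (dx u) p := contDiffAt_pd _ hu (by norm_num)
  have huy : ContDiffAt ℝ 2 (dy u) p := contDiffAt_pd _ hu (by norm_num)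
  have huxx : ContDiffAt ℝ 1 (dx (dx u)) p := contDiffAt_pd _ hux (by norm_num)
  have huxy : ContDiffAt ℝ 1 (dy (dx u)) p := contDiffAt_pd _ hux (by norm_num)
  have hu' : DifferentiableAt ℝ u p := hu.differentiableAt (by norm_num)
  have huy' : DifferentiableAt ℝ (dy u) p := huy.differentiableAt (by norm_num)
  have hu_comm : dx (dy u) p = dy (dx u) p := pd_comm _ _ (hu.of_le (by norm_num))
  have hux_comm : dx (dy (dx u)) p = dy (dx (dx u)) p := pd_comm _ _ hux
  rw [dy_e2Density hu' huy' (huxx.differentiableAt one_ne_zero),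
    dx_e2Flux hu' huy' (huxy.differentiableAt one_ne_zero), hu_comm, hux_comm]
  ring

theorem E2_conservation_law'_general (hu : ContDiffAt ℝ 3 u p)
    (hsol : dy (dy u) p = (dx u p + p.1) * dy (dx u) p - dy u p * (dx (dx u) p + 2)) :
    dy (fun q => u q * dx (dx u) q + 3 * u q + dy u q) p
      = dx (fun q => u q * dy (dx u) q + q.1 * dy u q) p :=
  sub_eq_zero.mp ((dy_e2Density_sub_dx_e2Flux hu).trans (sub_eq_zero.mpr hsol))

end ConservationLaw

/-- For a smooth solution `u` of Equation (E2)
`u_yy = (u_x + x)·u_xy − u_y·(u_xx + 2)`, the pair `P = u·u_xx + 3u + u_y`,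
`Q = u·u_xy + x·u_y` is a conservation law: `∂P/∂y = ∂Q/∂x`. -/
theorem E2_conservation_law' (u : ℝ × ℝ → ℝ)
    (hu : ContDiff ℝ (⊤ : ℕ∞) u)
    (hsol : ∀ p : ℝ × ℝ,
      dy (dy u) p = (dx u p + p.1) * dy (dx u) p - dy u p * (dx (dx u) p + 2)) :
    ∀ p : ℝ × ℝ,
      dy (fun q => u q * dx (dx u) q + 3 * u q + dy u q) p
        = dx (fun q => u q * dy (dx u) q + q.1 * dy u q) p := by
  intro p
  have hu₃ : ContDiffAt ℝ 3 u p := hu.contDiffAt.of_le (WithTop.coe_le_coe.mpr le_top)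
  exact E2_conservation_law'_general hu₃ (hsol p)
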